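/- arXiv:2307.16237 — 3 statements merged into one kernel-verified Lean document; each statement's English description precedes it below -/
import Mathlib

section
/- Let R be a ring. Then the following are equivalent: (1) R is a CUNC-ring; (2) the Jacobson radical J(R) is nil, the quotient ring R/J(R) is a CUNC-ring, and idempotents lift uniquely modulo J(R) (that is, every idempotent of R/J(R) is the image of an idempotent of R, and whenever e, f are idempotents of R with e − f ∈ J(R), then e = f). -/
/-!
In a CUNC-ring every idempotent `e` is clean, since `e = (1 - e) + (2e - 1)` and `2e - 1` is an
involution. Two idempotents that differ by a nilpotent are therefore equal. Comparing `e` with the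
idempotents `e + er(1 - e)` and `e + (1 - e)re` shows that idempotents are central, so that every
sum `e + b` of an idempotent and a nilpotent is again clean, as `(1 - e) + (2e - 1 + b)`. If `x`
lies in the Jacobson radical `J`, then `x = 1 + (x - 1)` is clean, hence `x = e + b` is nil-clean.
The image of `e` modulo `J` is both idempotent and nilpotent, so `e ∈ J`, which forces `e = 0`, and
`x` is nilpotent.

Thus in both directions `J` is nil, and along the quotient map idempotents lift while units and
nilpotents are reflected (`isUnit_of_map`, `isNilpotent_of_map`). Clean and nil-clean
decompositions can then be moved between `R` and `R / J`. For uniqueness in the quotient, two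
decompositions of one element are lifted to `f + b` and `g + c` in `R`; their difference is in `J`
and can be absorbed into `c`, and `f + b`, being clean, is uniquely nil-clean.
-/

open Pointwise

section Defs

variable {R : Type*} [Ring R]

/-- An element is nil-clean if it is a sum of an idempotent and a nilpotent. -/
def IsNilCleanElem (a : R) : Prop :=
  ∃ e b : R, IsIdempotentElem e ∧ IsNilpotent b ∧ a = e + b

/-- An element is strongly nil-clean if it is a sum of a commuting idempotent and nilpotent. -/
def IsStronglyNilCleanElem (a : R) : Prop :=
  ∃ e b : R, IsIdempotentElem e ∧ IsNilpotent b ∧ Commute e b ∧ a = e + b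

/-- An element is uniquely nil-clean if it is nil-clean and the idempotent in any
nil-clean decomposition of it is unique. -/
def IsUniquelyNilCleanElem (a : R) : Prop :=
  IsNilCleanElem a ∧ ∀ e b f c : R, IsIdempotentElem e → IsNilpotent b →
    IsIdempotentElem f → IsNilpotent c → a = e + b → a = f + c → e = f

/-- An element is clean if it is a sum of an idempotent and a unit. -/
def IsCleanElem (a : R) : Prop :=
  ∃ e u : R, IsIdempotentElem e ∧ IsUnit u ∧ a = e + u

/-- An element is uniquely clean if it is clean and the idempotent in any
clean decomposition of it is unique. -/
def IsUniquelyCleanElem (a : R) : Prop :=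
  IsCleanElem a ∧ ∀ e u f v : R, IsIdempotentElem e → IsUnit u →
    IsIdempotentElem f → IsUnit v → a = e + u → a = f + v → e = f

end Defs

/-- A ring is abelian if every idempotent is central. -/
def IsAbelianRing (R : Type*) [Ring R] : Prop :=
  ∀ e : R, IsIdempotentElem e → ∀ r : R, e * r = r * e

/-- A ring is a UU-ring if every unit is unipotent. -/
def IsUURing (R : Type*) [Ring R] : Prop :=
  ∀ u : R, IsUnit u → ∃ b : R, IsNilpotent b ∧ u = 1 + b

/-- A ring is a CUNC-ring if every clean element is uniquely nil-clean. -/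
def IsCUNCRing (R : Type*) [Ring R] : Prop :=
  ∀ a : R, IsCleanElem a → IsUniquelyNilCleanElem a

/-- A ring is a CUC-ring if every clean element is uniquely clean. -/
def IsCUCRing (R : Type*) [Ring R] : Prop :=
  ∀ a : R, IsCleanElem a → IsUniquelyCleanElem a

/-- A ring is semipotent if every left ideal not contained in the Jacobson radical
contains a nonzero idempotent. -/
def IsSemipotentRing (R : Type*) [Ring R] : Prop :=
  ∀ L : Ideal R, ¬ L ≤ Ideal.jacobson (⊥ : Ideal R) → ∃ e ∈ L, e ≠ 0 ∧ IsIdempotentElem e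

section Auxiliary

variable {R S : Type*} [Ring R] [Ring S]

theorem isNilpotent_of_map (φ : R →+* S) (hφ : ∀ x, φ x = 0 → IsNilpotent x) {x : R}
    (hx : IsNilpotent (φ x)) : IsNilpotent x := by
  obtain ⟨n, hn⟩ := hx
  obtain ⟨m, hm⟩ := hφ (x ^ n) (by rw [map_pow, hn])
  exact ⟨n * m, by rw [pow_mul, hm]⟩

theorem isUnit_of_map (φ : R →+* S) (hs : Function.Surjective φ)
    (hφ : ∀ x, φ x = 0 → IsNilpotent x) {x : R} (hx : IsUnit (φ x)) : IsUnit x := by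
  obtain ⟨w, h1, h2⟩ := isUnit_iff_exists.mp hx
  obtain ⟨y, rfl⟩ := hs w
  -- Both `x * y` and `y * x` are `1` minus a nilpotent, so `x` is invertible on either side.
  have h3 : IsUnit (x * y) := by
    have := (hφ (1 - x * y) (by simp [h1])).isUnit_one_sub
    simpa using this
  have h4 : IsUnit (y * x) := by
    have := (hφ (1 - y * x) (by simp [h2])).isUnit_one_sub
    simpa using this
  obtain ⟨a, ha, -⟩ := isUnit_iff_exists.mp h3
  obtain ⟨b, -, hb⟩ := isUnit_iff_exists.mp h4
  have hl : (b * y) * x = 1 := by rw [mul_assoc, hb]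
  have hr : x * (y * a) = 1 := by rw [← mul_assoc, ha]
  exact isUnit_iff_exists.mpr ⟨y * a, hr, by rwa [left_inv_eq_right_inv hl hr] at hl⟩

theorem isUnit_two_mul_sub_one {e : R} (he : IsIdempotentElem e) : IsUnit (2 * e - 1) := by
  have h : (2 * e - 1) * (2 * e - 1) = 1 := by
    have : (2 * e - 1) * (2 * e - 1) = 4 * (e * e) - 4 * e + 1 := by noncomm_ring
    rw [this, he.eq]; simp
  exact isUnit_iff_exists.mpr ⟨_, h, h⟩

theorem IsCUNCRing.eq_of_isNilpotent_sub (h : IsCUNCRing R) {e f : R} (he : IsIdempotentElem e)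
    (hf : IsIdempotentElem f) (hef : IsNilpotent (e - f)) : e = f :=
  (h e ⟨1 - e, 2 * e - 1, he.one_sub, isUnit_two_mul_sub_one he, by noncomm_ring⟩).2
    e 0 f (e - f) he .zero hf hef (by simp) (by simp)

theorem IsCUNCRing.isAbelianRing (h : IsCUNCRing R) : IsAbelianRing R := by
  intro e he r
  have h0 : (1 - e) * e = 0 := he.one_sub_mul_self
  have h0' : e * (1 - e) = 0 := he.mul_one_sub_self
  -- If `n ^ 2 = 0` and `e * n + n * e = n`, then `e + n` is an idempotent differing from `e` by a
  -- nilpotent.  This applies to `n = e * r * (1 - e)` and `n = (1 - e) * r * e`.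
  have hsq (n : R) (hn : n * n = 0) (h1 : e * n + n * e = n) : n = 0 := by
    have hidem : IsIdempotentElem (e + n) := by
      have : (e + n) * (e + n) = e * e + (e * n + n * e) + n * n := by noncomm_ring
      rw [IsIdempotentElem, this, he.eq, hn, h1, add_zero]
    have := h.eq_of_isNilpotent_sub hidem he ⟨2, by rw [pow_two]; simpa using hn⟩
    simpa using this
  have h1 : e * r * (1 - e) = 0 := by
    apply hsq
    · calc _ = e * r * ((1 - e) * e) * (r * (1 - e)) := by noncomm_ring
        _ = 0 := by rw [h0]; simp
    · calc _ = (e * e) * r * (1 - e) + e * r * ((1 - e) * e) := by noncomm_ring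
        _ = _ := by rw [h0, he.eq]; simp
  have h2 : (1 - e) * r * e = 0 := by
    apply hsq
    · calc _ = (1 - e) * r * (e * (1 - e)) * (r * e) := by noncomm_ring
        _ = 0 := by rw [h0']; simp
    · calc _ = (e * (1 - e)) * r * e + (1 - e) * r * (e * e) := by noncomm_ring
        _ = _ := by rw [h0', he.eq]; simp
  have h3 : e * r = e * r * e := by simpa [mul_sub, sub_eq_zero] using h1
  have h4 : r * e = e * r * e := by simpa [sub_mul, sub_eq_zero] using h2
  rw [h3, h4]

theorem IsCUNCRing.isCleanElem_add (h : IsCUNCRing R) {e b : R} (he : IsIdempotentElem e)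
    (hb : IsNilpotent b) : IsCleanElem (e + b) := by
  refine ⟨1 - e, 2 * e - 1 + b, he.one_sub, ?_, by noncomm_ring⟩
  refine hb.isUnit_add_left_of_commute (isUnit_two_mul_sub_one he) ?_
  have : Commute b e := (h.isAbelianRing e he b).symm
  exact ((Commute.ofNat_right b 2).mul_right this).sub_right (Commute.one_right b)

theorem isUnit_one_add_of_mem_jacobson {x : R}
    (hx : x ∈ TwoSidedIdeal.jacobson (⊥ : TwoSidedIdeal R)) : IsUnit (1 + x) := by
  have left (y : R) (hy : y ∈ TwoSidedIdeal.jacobson (⊥ : TwoSidedIdeal R)) :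
      ∃ z, z * (1 + y) = 1 := by
    obtain ⟨z, hz⟩ := TwoSidedIdeal.mem_jacobson_iff.mp hy 1
    rw [TwoSidedIdeal.mem_bot, sub_eq_zero] at hz
    exact ⟨z, by rw [mul_one] at hz; rw [mul_add, mul_one, add_comm, hz]⟩
  obtain ⟨z, hz⟩ := left x hx
  -- The left inverse `z = 1 - z * x` also lies in `1 + J`, so it is itself left invertible.
  obtain ⟨w, hw⟩ := left (-(z * x)) (neg_mem (TwoSidedIdeal.mul_mem_left _ z x hx))
  have hz' : 1 + -(z * x) = z := by rw [← hz]; noncomm_ring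
  rw [hz'] at hw
  have : w = 1 + x := left_inv_eq_right_inv hw hz
  exact isUnit_iff_exists.mpr ⟨z, this ▸ hw, hz⟩

theorem IsCUNCRing.isNilpotent_of_mem_jacobson (h : IsCUNCRing R) {x : R}
    (hx : x ∈ TwoSidedIdeal.jacobson (⊥ : TwoSidedIdeal R)) : IsNilpotent x := by
  have hu : IsUnit (x - 1) := by
    have := (isUnit_one_add_of_mem_jacobson (neg_mem hx)).neg
    rwa [neg_add, neg_neg, neg_add_eq_sub] at this
  obtain ⟨⟨e, b, he, hb, hxe⟩, -⟩ := h x ⟨1, x - 1, .one, hu, by simp⟩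
  let φ := (TwoSidedIdeal.jacobson (⊥ : TwoSidedIdeal R)).ringCon.mk'
  have hφ (y : R) : φ y = 0 ↔ y ∈ TwoSidedIdeal.jacobson (⊥ : TwoSidedIdeal R) := by
    rw [← TwoSidedIdeal.mem_ker, TwoSidedIdeal.ker_ringCon_mk']
  have h0 : φ e = 0 := by
    have hs : φ e + φ b = 0 := by rw [← map_add, ← hxe, hφ]; exact hx
    refine eq_of_isNilpotent_sub_of_isIdempotentElem_of_commute (he.map φ) .zero ?_ (.zero_right _)
    rw [sub_zero, eq_neg_of_add_eq_zero_left hs]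
    exact (hb.map φ).neg
  -- `1 - e` is a unit annihilated by `e`.
  have he0 : e = 0 := by
    have := isUnit_one_add_of_mem_jacobson (neg_mem ((hφ e).mp h0))
    rw [← sub_eq_add_neg] at this
    exact this.mul_left_eq_zero.mp he.mul_one_sub_self
  rwa [hxe, he0, zero_add]

variable (φ : R →+* S)

/-- The CUNC property descends along a surjection with nil kernel. -/
theorem IsCUNCRing.of_surjective_of_nil (h : IsCUNCRing R) (hs : Function.Surjective φ)
    (hφ : ∀ x, φ x = 0 → IsNilpotent x) : IsCUNCRing S := by
  have lift (e : S) (he : IsIdempotentElem e) : ∃ e' : R, IsIdempotentElem e' ∧ φ e' = e :=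
    exists_isIdempotentElem_eq_of_ker_isNilpotent φ hφ e (hs e) he
  rintro _ ⟨e, u, he, hu, rfl⟩
  refine ⟨?_, ?_⟩
  · obtain ⟨e, he', rfl⟩ := lift e he
    obtain ⟨u, rfl⟩ := hs u
    obtain ⟨⟨f, b, hf, hb, hfb⟩, -⟩ := h (e + u) ⟨e, u, he', isUnit_of_map φ hs hφ hu, rfl⟩
    exact ⟨φ f, φ b, hf.map φ, hb.map φ, by rw [← map_add, hfb, map_add]⟩
  · intro f b g c hf hb hg hc h1 h2
    obtain ⟨f, hf', rfl⟩ := lift f hf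
    obtain ⟨g, hg', rfl⟩ := lift g hg
    obtain ⟨b, rfl⟩ := hs b
    have hb' := isNilpotent_of_map φ hφ hb
    -- `c` is replaced by the lift `f + b - g`, so that both decompositions have the same sum.
    have hc' : IsNilpotent (f + b - g) := by
      apply isNilpotent_of_map φ hφ
      rwa [map_sub, map_add, ← h1, h2, add_sub_cancel_left]
    rw [(h _ (h.isCleanElem_add hf' hb')).2 f b g (f + b - g) hf' hb' hg' hc' rfl (by simp)]

/-- The CUNC property ascends along a surjection with nil kernel that is injective on
idempotents. -/
theorem IsCUNCRing.of_map (h : IsCUNCRing S) (hs : Function.Surjective φ)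
    (hφ : ∀ x, φ x = 0 → IsNilpotent x)
    (huniq : ∀ e f : R, IsIdempotentElem e → IsIdempotentElem f → φ e = φ f → e = f) :
    IsCUNCRing R := by
  rintro _ ⟨e, u, he, hu, rfl⟩
  obtain ⟨⟨f, b, hf, hb, hfb⟩, hun⟩ :=
    h (φ (e + u)) ⟨φ e, φ u, he.map φ, hu.map φ, map_add φ e u⟩
  refine ⟨?_, fun f b g c hf hb hg hc h1 h2 => huniq f g hf hg ?_⟩
  · obtain ⟨f, hf', rfl⟩ := exists_isIdempotentElem_eq_of_ker_isNilpotent φ hφ f (hs f) hf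
    refine ⟨f, e + u - f, hf', isNilpotent_of_map φ hφ ?_, by simp⟩
    rwa [map_sub, hfb, add_sub_cancel_left]
  · exact hun (φ f) (φ b) (φ g) (φ c) (hf.map φ) (hb.map φ) (hg.map φ) (hc.map φ)
      (by rw [h1, map_add]) (by rw [h2, map_add])

end Auxiliary

/-- `R` is a CUNC-ring iff `J(R)` is nil, `R/J(R)` is a CUNC-ring, and idempotents
lift uniquely modulo `J(R)`. -/
theorem cunc_iff_jacobson_quotient {R : Type*} [Ring R] :
    IsCUNCRing R ↔
      ((∀ x ∈ TwoSidedIdeal.jacobson (⊥ : TwoSidedIdeal R), IsNilpotent x) ∧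
        IsCUNCRing (TwoSidedIdeal.jacobson (⊥ : TwoSidedIdeal R)).ringCon.Quotient ∧
        (∀ ebar : (TwoSidedIdeal.jacobson (⊥ : TwoSidedIdeal R)).ringCon.Quotient,
          IsIdempotentElem ebar → ∃ e : R, IsIdempotentElem e ∧
            (TwoSidedIdeal.jacobson (⊥ : TwoSidedIdeal R)).ringCon.mk' e = ebar) ∧
        (∀ e f : R, IsIdempotentElem e → IsIdempotentElem f →
          e - f ∈ TwoSidedIdeal.jacobson (⊥ : TwoSidedIdeal R) → e = f)) := by
  have hs := (TwoSidedIdeal.jacobson (⊥ : TwoSidedIdeal R)).ringCon.mk'_surjective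
  have hker (y : R) : (TwoSidedIdeal.jacobson (⊥ : TwoSidedIdeal R)).ringCon.mk' y = 0 ↔
      y ∈ TwoSidedIdeal.jacobson (⊥ : TwoSidedIdeal R) := by
    rw [← TwoSidedIdeal.mem_ker, TwoSidedIdeal.ker_ringCon_mk']
  constructor
  · intro h
    have hnil := fun x hx => h.isNilpotent_of_mem_jacobson (x := x) hx
    have hφ := fun y hy => hnil y ((hker y).mp hy)
    exact ⟨hnil, h.of_surjective_of_nil _ hs hφ,
      fun e he => exists_isIdempotentElem_eq_of_ker_isNilpotent _ hφ e (hs e) he,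
      fun e f he hf hef => h.eq_of_isNilpotent_sub he hf (hnil _ hef)⟩
  · rintro ⟨hnil, hq, -, huniq⟩
    refine hq.of_map _ hs (fun y hy => hnil y ((hker y).mp hy)) fun e f he hf hef => ?_
    exact huniq e f he hf ((hker _).mp (by rw [map_sub, hef, sub_self]))
end

section
/- If R is a CUNC-ring and e is an idempotent of R, then the corner ring eRe (the set {e r e : r ∈ R}, which is a ring under the operations inherited from R, with identity element e) is a CUNC-ring. -/
/-! The key point is that a CUNC-ring is abelian (`isAbelianRing_of_isCUNCRing`). An idempotent `e` is
clean, since `e = (1 - e) + (2e - 1)`, and for `x` in `eR(1 - e)` or `(1 - e)Re` it has the nil-clean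
decompositions `e + 0` and `(e + x) + (-x)`, so uniqueness forces `x = 0`.

An element `a = f + u` that is clean in `eRe` is clean in `R` too, because
`a = (f + (1 - e)) + (u - (1 - e))`. Uniqueness of nil-clean decompositions of `a` in `eRe` is then
immediate from uniqueness in `R`; for existence, multiply a decomposition of `a` in `R` by the
central idempotent `e`. -/

open Pointwise

section Relative

variable {R : Type*} [Ring R]

/-- `a` is clean in the (possibly non-unital) subring given by the subset `S` of `R`,
with identity element `o`: it is a sum of an idempotent of `S` and an element of `S`
invertible in `S`. -/
def IsCleanIn (S : Set R) (o : R) (a : R) : Prop :=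
  ∃ f ∈ S, ∃ u ∈ S, f * f = f ∧ (∃ v ∈ S, u * v = o ∧ v * u = o) ∧ a = f + u

/-- `a` is nil-clean in the subring given by the subset `S` of `R`. -/
def IsNilCleanIn (S : Set R) (a : R) : Prop :=
  ∃ f ∈ S, ∃ b ∈ S, f * f = f ∧ IsNilpotent b ∧ a = f + b

/-- `a` is uniquely nil-clean in the subring given by the subset `S` of `R`. -/
def IsUniquelyNilCleanIn (S : Set R) (a : R) : Prop :=
  IsNilCleanIn S a ∧ ∀ f ∈ S, ∀ b ∈ S, ∀ g ∈ S, ∀ c ∈ S,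
    f * f = f → IsNilpotent b → g * g = g → IsNilpotent c →
      a = f + b → a = g + c → f = g

/-- The subring given by the subset `S` of `R`, with identity element `o`,
is a CUNC-ring: each of its clean elements is uniquely nil-clean in it. -/
def IsCUNCIn (S : Set R) (o : R) : Prop :=
  ∀ a ∈ S, IsCleanIn S o a → IsUniquelyNilCleanIn S a

end Relative

theorem isCleanElem_of_isIdempotentElem {R : Type*} [Ring R] {e : R} (he : IsIdempotentElem e) :
    IsCleanElem e := by
  have h2 : (2 * e - 1) * (2 * e - 1) = 1 := by
    have : (2 * e - 1) * (2 * e - 1) = 4 * (e * e) - 4 * e + 1 := by noncomm_ring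
    rw [this, he.eq]; noncomm_ring
  exact ⟨1 - e, 2 * e - 1, he.one_sub, ⟨⟨_, _, h2, h2⟩, rfl⟩, by noncomm_ring⟩

/-- Perturbing an idempotent `e` of a CUNC-ring by a square-zero `x` cannot give another idempotent:
`e + 0` and `(e + x) + (-x)` are both nil-clean decompositions of the clean element `e`. -/
theorem eq_zero_of_isIdempotentElem_add {R : Type*} [Ring R] (h : IsCUNCRing R) {e x : R}
    (he : IsIdempotentElem e) (hex : IsIdempotentElem (e + x)) (hx : x * x = 0) : x = 0 := by
  have hn : IsNilpotent (-x) := ⟨2, by rw [pow_two, neg_mul_neg, hx]⟩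
  simpa using (h e (isCleanElem_of_isIdempotentElem he)).2 e 0 (e + x) (-x) he IsNilpotent.zero
    hex hn (by simp) (by simp)

theorem isAbelianRing_of_isCUNCRing {R : Type*} [Ring R] (h : IsCUNCRing R) :
    IsAbelianRing R := by
  intro e he r
  have he' : e * e = e := he
  have he2 (y : R) : e * (e * y) = e * y := by rw [← mul_assoc, he']
  have h1 : e * r - e * r * e = 0 := by
    refine eq_zero_of_isIdempotentElem_add h he ?_ ?_
    · simp [IsIdempotentElem, mul_add, add_mul, mul_sub, sub_mul, mul_assoc, he', he2]
    · simp [mul_sub, sub_mul, mul_assoc, he2]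
  have h2 : r * e - e * r * e = 0 := by
    refine eq_zero_of_isIdempotentElem_add h he ?_ ?_
    · simp [IsIdempotentElem, mul_add, add_mul, mul_sub, sub_mul, mul_assoc, he', he2]
    · simp [mul_sub, sub_mul, mul_assoc, he2]
  rw [sub_eq_zero.mp h1, sub_eq_zero.mp h2]

/-- Elements clean in a corner `eRe` are clean in `R`: enlarge the idempotent by `1 - e` and
the unit by `-(1 - e)`. -/
theorem isCleanElem_of_isCleanIn_corner {R : Type*} [Ring R] {e a : R} (he : IsIdempotentElem e)
    (ha : IsCleanIn {x : R | ∃ r : R, x = e * r * e} e a) : IsCleanElem a := by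
  have he' : e * e = e := he
  have hl (x : R) (hx : ∃ r : R, x = e * r * e) : e * x = x := by
    obtain ⟨r, rfl⟩ := hx
    simp only [← mul_assoc, he']
  have hr (x : R) (hx : ∃ r : R, x = e * r * e) : x * e = x := by
    obtain ⟨r, rfl⟩ := hx
    simp only [mul_assoc, he']
  obtain ⟨f, hf, u, hu, hff, ⟨v, hv, huv, hvu⟩, rfl⟩ := ha
  refine ⟨f + (1 - e), u - (1 - e), ?_, ⟨⟨u - (1 - e), v - (1 - e), ?_, ?_⟩, rfl⟩, by abel⟩
  · simp [IsIdempotentElem, mul_add, add_mul, mul_sub, sub_mul, hff, hl f hf, hr f hf, he']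
  · simp [mul_sub, sub_mul, huv, hr u hu, hl v hv, he']
  · simp [mul_sub, sub_mul, hvu, hl u hu, hr v hv, he']

/-- If `R` is a CUNC-ring then so is the corner ring `eRe` (whose identity is `e`)
for every idempotent `e` of `R`. -/
theorem corner_cunc_of_cunc {R : Type*} [Ring R] (h : IsCUNCRing R)
    (e : R) (he : IsIdempotentElem e) :
    IsCUNCIn {x : R | ∃ r : R, x = e * r * e} e := by
  have he' : e * e = e := he
  have hc : ∀ r : R, e * r = r * e := isAbelianRing_of_isCUNCRing h e he
  intro a ha hclean
  obtain ⟨⟨g, b, hg, hb, hab⟩, huniq⟩ := h a (isCleanElem_of_isCleanIn_corner he hclean)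
  have hmem (x : R) : ∃ r : R, e * x = e * r * e := ⟨x, by rw [hc x, mul_assoc, he']⟩
  refine ⟨⟨e * g, hmem g, e * b, hmem b, IsIdempotentElem.mul_of_commute (hc g) he hg,
    Commute.isNilpotent_mul_left (hc b) hb, ?_⟩, ?_⟩
  · obtain ⟨r, hr⟩ := ha
    rw [← mul_add, ← hab, hr]
    simp only [← mul_assoc, he']
  · intro f _ b _ g _ c _ hf hb hg hc
    exact huniq f b g c hf hb hg hc
end

section
/- Let R be a CUNC-ring and let G be a locally finite 2-group. Then the group ring RG is a CUNC-ring. -/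
/-! A ring is CUNC exactly when it is abelian and UU. In such a ring `-1 = 1 + b` with `b`
nilpotent, so `2` is nilpotent. The heart of the matter is that the augmentation ideal
`ker (RG → R)` is then nil (`isNilpotent_of_augmentation_eq_zero`). For finite `G` this goes by
induction on the order of `G`: take a central `z` of order two. The central element `1 - z`
satisfies `(1 - z)² = 2 (1 - z)`, hence is nilpotent, and it generates the kernel of
`RG → R(G/⟨z⟩)`; a power of an element of augmentation zero lies in this kernel. A locally finite
group reduces to the finite subgroup generated by the support.

Both conditions lift along `RG → R` once its kernel is nil. If `u` is a unit, `u - 1` has nilpotent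
augmentation, so `u - 1` is nilpotent. If `e` is idempotent with augmentation `e₀`, then `e₀` is
a central idempotent of `R`, hence central in `RG`, and `e - e₀` is a nilpotent difference of
commuting idempotents, hence zero; so `e = e₀` is central. -/

open Pointwise

/-! ### CUNC-rings are the abelian UU-rings -/

/-- Commuting idempotents with nilpotent difference coincide, because `(e - f)³ = e - f`. -/
lemma idem_eq_of_isNilpotent_sub {S : Type*} [Ring S] {e f : S} (he : IsIdempotentElem e)
    (hf : IsIdempotentElem f) (hc : Commute e f) (hn : IsNilpotent (e - f)) : e = f := by
  have h3 : (e - f) * (e - f) * (e - f) = e - f := by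
    have hfe : f * e = e * f := hc.eq.symm
    have h1 : (e - f) * (e - f) = e + f - e * f - e * f := by
      rw [sub_mul, mul_sub, mul_sub, he.eq, hf.eq, hfe]; abel
    have h2 : e * f * e = e * f := by rw [mul_assoc, hfe, ← mul_assoc, he.eq]
    have h4 : e * f * f = e * f := by rw [mul_assoc, hf.eq]
    rw [h1]
    simp only [mul_sub, sub_mul, add_mul, h2, h4, he.eq, hf.eq, hfe]
    abel
  obtain ⟨n, hn⟩ := hn
  have key : ∀ k : ℕ, (e - f) ^ (2 * k + 1) = e - f := by
    intro k
    induction k with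
    | zero => simp
    | succ k ih =>
      have : 2 * (k + 1) + 1 = (2 * k + 1) + 1 + 1 := by ring
      rw [this, pow_succ, pow_succ, ih, h3]
  have h0 : (e - f) ^ (2 * n + 1) = 0 := pow_eq_zero_of_le (by omega) hn
  rw [key n] at h0
  exact sub_eq_zero.mp h0

lemma IsUURing.isNilpotent_two {S : Type*} [Ring S] (h : IsUURing S) : IsNilpotent (2 : S) := by
  obtain ⟨b, hb, h1⟩ := h (-1) isUnit_one.neg
  have : (2 : S) = -b := by
    rw [← one_add_one_eq_two, eq_neg_iff_add_eq_zero, add_assoc, ← h1, add_neg_cancel]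
  rw [this]
  exact hb.neg

/-- If `x² = 0` and `ex + xe = x`, then `a = e + x` is idempotent, hence clean, as
`a = (1 - a) + (2a - 1)`. It has the nil-clean decompositions `a + 0` and `e + x`, so in a CUNC-ring
`x = 0`. -/
lemma IsCUNCRing.eq_zero_of_idem_add {S : Type*} [Ring S] (h : IsCUNCRing S) {e x : S}
    (he : IsIdempotentElem e) (hx : x * x = 0) (hex : e * x + x * e = x) : x = 0 := by
  have ha : IsIdempotentElem (e + x) := by
    change (e + x) * (e + x) = e + x
    calc (e + x) * (e + x) = e * e + (e * x + x * e) + x * x := by noncomm_ring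
      _ = e + x := by rw [he.eq, hex, hx, add_zero]
  have hclean : IsCleanElem (e + x) := by
    refine ⟨1 - (e + x), (e + x) - (1 - (e + x)), ha.one_sub, ?_, by abel⟩
    have hsq : ((e + x) - (1 - (e + x))) * ((e + x) - (1 - (e + x))) = 1 := by
      generalize e + x = a at ha
      have : (a - (1 - a)) * (a - (1 - a)) = 4 • (a * a) - 4 • a + 1 := by noncomm_ring
      rw [this, ha.eq]; simp
    exact ⟨⟨_, _, hsq, hsq⟩, rfl⟩
  have := (h _ hclean).2 (e + x) 0 e x ha IsNilpotent.zero he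
    ⟨2, by rw [pow_two, hx]⟩ (by simp) rfl
  simpa using this

/-- The off-diagonal Peirce components `er(1 - e)` and `(1 - e)re` vanish. -/
lemma IsCUNCRing.isAbelianRing_s18 {S : Type*} [Ring S] (h : IsCUNCRing S) : IsAbelianRing S := by
  intro e he r
  have ee := he.eq
  have h1 : e * r - e * r * e = 0 := by
    apply h.eq_zero_of_idem_add he
    · have : e * r * e * e = e * r * e := by rw [mul_assoc, ee]
      calc (e * r - e * r * e) * (e * r - e * r * e)
          = (e * r * e - e * r * e * e) * (r - r * e) := by noncomm_ring
        _ = 0 := by rw [this, sub_self, zero_mul]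
    · calc e * (e * r - e * r * e) + (e * r - e * r * e) * e
          = (e * e) * r - (e * e) * r * e + (e * r * e - e * r * (e * e)) := by noncomm_ring
        _ = e * r - e * r * e := by rw [ee]; abel
  have h2 : r * e - e * r * e = 0 := by
    apply h.eq_zero_of_idem_add he
    · have : e * r * e = e * e * r * e := by rw [ee]
      calc (r * e - e * r * e) * (r * e - e * r * e)
          = (r - e * r) * (e * r * e - e * e * r * e) := by noncomm_ring
        _ = 0 := by rw [← this, sub_self, mul_zero]
    · calc e * (r * e - e * r * e) + (r * e - e * r * e) * e
          = e * r * e - (e * e) * r * e + (r * (e * e) - e * r * (e * e)) := by noncomm_ring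
        _ = r * e - e * r * e := by rw [ee]; abel
  rw [sub_eq_zero.mp h1, sub_eq_zero.mp h2]

/-- A unit `u = e + b` has `e = u - b` a unit, since `b` is nilpotent and commutes with `u`. So
`e = 1`. -/
lemma IsCUNCRing.isUURing {S : Type*} [Ring S] (h : IsCUNCRing S) : IsUURing S := by
  intro u hu
  obtain ⟨e, b, he, hb, hub⟩ := (h u ⟨0, u, IsIdempotentElem.zero, hu, by simp⟩).1
  have hbu : Commute b u := by
    rw [hub]
    exact (Commute.add_right (h.isAbelianRing_s18 e he b).symm (Commute.refl b))
  have hunit : IsUnit e := by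
    have : e = u - b := by rw [hub]; abel
    rw [this]
    have hneg : IsUnit (-b + u) := hb.neg.isUnit_add_right_of_commute hu hbu.neg_left
    rwa [neg_add_eq_sub] at hneg
  have he1 : e = 1 := hunit.mul_left_cancel (by rw [he.eq, mul_one])
  exact ⟨b, hb, by rw [hub, he1]⟩

/-- In an abelian UU-ring a clean element `e + (1 + b)` is `(1 - e) + (2e + b)`, and `2e + b` is
nilpotent because `2e` is nilpotent and central. -/
lemma isCUNCRing_of_isAbelianRing_of_isUURing {S : Type*} [Ring S] (ha : IsAbelianRing S)
    (hu : IsUURing S) : IsCUNCRing S := by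
  rintro a ⟨e, u, he, hunit, rfl⟩
  obtain ⟨b, hb, rfl⟩ := hu u hunit
  refine ⟨⟨1 - e, 2 * e + b, he.one_sub, ?_, by rw [two_mul]; abel⟩, ?_⟩
  · have h2e : IsNilpotent (2 * e) :=
      (Commute.ofNat_left 2 e).isNilpotent_mul_right hu.isNilpotent_two
    have hc : Commute (2 * e) b := (Commute.ofNat_left 2 b).mul_left (ha e he b)
    exact hc.isNilpotent_add h2e hb
  · intro f c g d hf hc hg hd h1 h2
    have hfg : f - g = d - c := by
      have := h1.symm.trans h2
      rw [sub_eq_sub_iff_add_eq_add, this, add_comm]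
    apply idem_eq_of_isNilpotent_sub hf hg (ha f hf g)
    rw [hfg]
    have hdc : d = c + (f - g) := by rw [hfg]; abel
    have hcomm : Commute d c := by
      rw [hdc]
      exact (Commute.refl c).add_left (Commute.sub_left (ha f hf c) (ha g hg c))
    exact hcomm.isNilpotent_sub hd hc

/-! ### The augmentation ideal is nil -/

section GroupRing

open MonoidAlgebra

universe u v

/-- The augmentation map `RG → R`, sending every group element to `1`. -/
noncomputable def augmentation (R : Type u) (G : Type v) [Ring R] [Group G] :
    MonoidAlgebra R G →+* R :=
  liftNCRingHom (RingHom.id R) (1 : G →* R) (fun _ _ => Commute.one_right _)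

variable {R : Type u} [Ring R]

@[simp]
lemma augmentation_single {G : Type v} [Group G] (g : G) (r : R) :
    augmentation R G (single g r) = r := by
  simp [augmentation]

lemma augmentation_mapDomainRingHom {G H : Type v} [Group G] [Group H] (f : G →* H)
    (x : MonoidAlgebra R G) :
    augmentation R H (mapDomainRingHom R f x) = augmentation R G x := by
  induction x using MonoidAlgebra.induction_linear with
  | zero => simp
  | add x y hx hy => rw [map_add, map_add, map_add, hx, hy]
  | single g r => simp

/-- `1 - z` is nilpotent for an involution `z`, since `(1 - z)² = 2 (1 - z)`. -/
lemma isNilpotent_one_sub_of_sq {S : Type*} [Ring S] (h2 : IsNilpotent (2 : S)) {z : S}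
    (hz : z * z = 1) : IsNilpotent (1 - z) := by
  have hsq : (1 - z) * (1 - z) = 2 * (1 - z) := by
    calc (1 - z) * (1 - z) = 1 - 2 * z + z * z := by noncomm_ring
      _ = 2 * (1 - z) := by rw [hz]; noncomm_ring
  have key : ∀ n : ℕ, (1 - z) ^ (n + 1) = 2 ^ n * (1 - z) := by
    intro n
    induction n with
    | zero => simp
    | succ n ih => rw [pow_succ, ih, mul_assoc, hsq, ← mul_assoc, ← pow_succ]
  obtain ⟨n, hn⟩ := h2
  exact ⟨n + 1, by rw [key, hn, zero_mul]⟩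

/-- Every `x ∈ RG` agrees, modulo the right ideal generated by `1 - z`, with the element obtained by
replacing each group element by a fixed representative of its coset modulo `⟨z⟩`. -/
lemma exists_sub_mapDomain_out {G : Type v} [Group G] {z : G} (hz : z * z = 1)
    (hcen : ∀ g : G, g * z = z * g) (x : MonoidAlgebra R G) :
    ∃ y : MonoidAlgebra R G, x - mapDomain (Quotient.out : G ⧸ Subgroup.zpowers z → G)
      (mapDomain (QuotientGroup.mk : G → G ⧸ Subgroup.zpowers z) x) = (1 - single z 1) * y := by
  induction x using MonoidAlgebra.induction_linear with
  | zero => exact ⟨0, by simp⟩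
  | add x y hx hy =>
    obtain ⟨a, ha⟩ := hx
    obtain ⟨b, hb⟩ := hy
    refine ⟨a + b, ?_⟩
    rw [mapDomain_add, mapDomain_add, mul_add, ← ha, ← hb]
    abel
  | single g r =>
    obtain ⟨⟨h, hh⟩, hout⟩ := QuotientGroup.mk_out_eq_mul (Subgroup.zpowers z) g
    rw [mapDomain_single, mapDomain_single, hout]
    obtain ⟨i, rfl⟩ := Subgroup.mem_zpowers_iff.mp hh
    have hz2 : z ^ (2 : ℤ) = 1 := by rw [zpow_two, hz]
    rcases Int.even_or_odd' i with ⟨k, rfl | rfl⟩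
    · exact ⟨0, by simp [zpow_mul, hz2]⟩
    · refine ⟨single g r, ?_⟩
      simp [zpow_add, zpow_mul, hz2, sub_mul, single_mul_single, hcen]

/-- The inductive step for finite groups: elements of `RG` that become nilpotent in
`R(G/⟨z⟩)`, for `z` a central involution, are nilpotent. -/
lemma isNilpotent_of_isNilpotent_mapDomain {G : Type v} [Group G] {z : G} (hz : z * z = 1)
    (hcen : ∀ g : G, g * z = z * g) (h2 : IsNilpotent (2 : R)) [(Subgroup.zpowers z).Normal]
    (x : MonoidAlgebra R G)
    (hx : IsNilpotent (mapDomainRingHom R (QuotientGroup.mk' (Subgroup.zpowers z)) x)) :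
    IsNilpotent x := by
  obtain ⟨n, hn⟩ := hx
  rw [← map_pow] at hn
  obtain ⟨y, hy⟩ := exists_sub_mapDomain_out hz hcen (x ^ n)
  have h0 : mapDomain (QuotientGroup.mk : G → G ⧸ Subgroup.zpowers z) (x ^ n) = 0 := hn
  rw [h0, mapDomain_zero, sub_zero] at hy
  have h2' : IsNilpotent (2 : MonoidAlgebra R G) := by
    have := h2.map (singleOneRingHom : R →+* MonoidAlgebra R G)
    rwa [map_ofNat] at this
  have hnil : IsNilpotent (1 - single z 1 : MonoidAlgebra R G) :=
    isNilpotent_one_sub_of_sq h2' (by rw [single_mul_single, hz, mul_one, one_def])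
  have hcomm : Commute (single z 1 : MonoidAlgebra R G) y := by
    clear hy
    induction y using MonoidAlgebra.induction_linear with
    | zero => exact Commute.zero_right _
    | add a b ha hb => exact ha.add_right hb
    | single g r =>
      change single z 1 * single g r = single g r * single z 1
      simp [single_mul_single, hcen]
  have hxn : IsNilpotent (x ^ n) := by
    rw [hy]
    exact ((Commute.one_left y).sub_left hcomm).isNilpotent_mul_right hnil
  obtain ⟨m, hm⟩ := hxn
  exact ⟨n * m, by rw [pow_mul, hm]⟩

/-- The augmentation ideal of a finite `2`-group is nil when `2` is nilpotent. -/
lemma isNilpotent_of_augmentation_eq_zero_of_finite (h2 : IsNilpotent (2 : R)) (n : ℕ) :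
    ∀ (G : Type v) [Group G] [Finite G], Nat.card G = n → IsPGroup 2 G →
      ∀ x : MonoidAlgebra R G, augmentation R G x = 0 → IsNilpotent x := by
  induction n using Nat.strong_induction_on with
  | _ n ih =>
    intro G _ _ hcard hG x hx
    rcases subsingleton_or_nontrivial G with hs | hs
    · have hsingle : x = single 1 (augmentation R G x) := by
        clear hx
        induction x using MonoidAlgebra.induction_linear with
        | zero => simp
        | add x y hx hy => rw [map_add, single_add, ← hx, ← hy]
        | single g r => rw [augmentation_single, Subsingleton.elim g 1]
      rw [hsingle, hx, single_zero]
      exact IsNilpotent.zero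
    · have := hG.center_nontrivial
      have hdvd : 2 ∣ Nat.card (Subgroup.center G) := by
        obtain ⟨k, hk⟩ := (IsPGroup.iff_card (p := 2)).mp (hG.to_subgroup (Subgroup.center G))
        have h1 : 1 < Nat.card (Subgroup.center G) := Finite.one_lt_card
        rw [hk] at h1 ⊢
        exact dvd_pow_self 2 (by rintro rfl; simp at h1)
      obtain ⟨⟨z, hzc⟩, hord⟩ := exists_prime_orderOf_dvd_card' 2 hdvd
      rw [Subgroup.orderOf_mk] at hord
      have hcen : ∀ g : G, g * z = z * g := Subgroup.mem_center_iff.mp hzc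
      have hz : z * z = 1 := by rw [← pow_two, ← hord, pow_orderOf_eq_one]
      have hnorm : (Subgroup.zpowers z).Normal :=
        ⟨fun y hy g => by
          have hy' : y ∈ Subgroup.center G :=
            (Subgroup.zpowers_le (H := Subgroup.center G)).mpr hzc hy
          rwa [Subgroup.mem_center_iff.mp hy' g, mul_inv_cancel_right]⟩
      apply isNilpotent_of_isNilpotent_mapDomain hz hcen h2
      refine ih (Nat.card (G ⧸ Subgroup.zpowers z)) ?_ _ rfl (hG.to_quotient _) _ ?_
      · have hmul := Subgroup.card_eq_card_quotient_mul_card_subgroup (Subgroup.zpowers z)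
        rw [Nat.card_zpowers, hord] at hmul
        have : 0 < Nat.card (G ⧸ Subgroup.zpowers z) := Nat.card_pos
        omega
      · rw [augmentation_mapDomainRingHom, hx]

/-- The augmentation ideal of a locally finite `2`-group is nil when `2` is nilpotent: an element is
supported on the finite subgroup generated by its support. -/
lemma isNilpotent_of_augmentation_eq_zero {G : Type v} [Group G] (h2 : IsNilpotent (2 : R))
    (hlf : ∀ H : Subgroup G, H.FG → Finite H) (hG : IsPGroup 2 G)
    (x : MonoidAlgebra R G) (hx : augmentation R G x = 0) : IsNilpotent x := by
  let H : Subgroup G := Subgroup.closure (x.coeff.support : Set G)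
  have hfin : Finite H := hlf H ⟨x.coeff.support, rfl⟩
  have hrange : x ∈ (mapDomainRingHom R H.subtype).range := by
    rw [← sum_coeff_single x]
    refine sum_mem fun g hg => ?_
    exact ⟨single ⟨g, Subgroup.subset_closure hg⟩ (x.coeff g), by simp⟩
  obtain ⟨y, hy⟩ := hrange
  rw [← hy, augmentation_mapDomainRingHom] at hx
  rw [← hy]
  exact (isNilpotent_of_augmentation_eq_zero_of_finite h2 _ H rfl (hG.to_subgroup H) y hx).map _

end GroupRing

/-! ### Lifting along the augmentation -/

/-- If `R` is a CUNC-ring and `G` is a locally finite 2-group, then the group ring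
`RG` is a CUNC-ring. -/
theorem groupRing_cunc_of_cunc {R : Type*} [Ring R] {G : Type*} [Group G]
    (hR : IsCUNCRing R)
    (hlf : ∀ H : Subgroup G, H.FG → Finite H)
    (h2 : ∀ g : G, ∃ n : ℕ, g ^ (2 ^ n) = 1) :
    IsCUNCRing (MonoidAlgebra R G) := by
  have h2R : IsNilpotent (2 : R) := hR.isUURing.isNilpotent_two
  have hker := isNilpotent_of_augmentation_eq_zero h2R hlf h2
  apply isCUNCRing_of_isAbelianRing_of_isUURing
  · intro e he x
    have he0 : IsIdempotentElem (augmentation R G e) := he.map (augmentation R G)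
    have hc : ∀ y : MonoidAlgebra R G, Commute (MonoidAlgebra.single 1 (augmentation R G e)) y := by
      intro y
      induction y using MonoidAlgebra.induction_linear with
      | zero => exact Commute.zero_right _
      | add a b ha hb => exact ha.add_right hb
      | single g r =>
        change _ * _ = _ * _
        simp [MonoidAlgebra.single_mul_single, hR.isAbelianRing_s18 _ he0 r]
    have heq : e = MonoidAlgebra.single 1 (augmentation R G e) := by
      apply idem_eq_of_isNilpotent_sub he _ (hc e).symm
      · exact hker _ (by simp)
      · change _ * _ = _
        rw [MonoidAlgebra.single_mul_single, he0.eq, mul_one]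
    rw [heq]
    exact hc x
  · intro u hu
    obtain ⟨b, ⟨n, hn⟩, hb⟩ := hR.isUURing _ (hu.map (augmentation R G))
    refine ⟨u - 1, ?_, by abel⟩
    have h0 : augmentation R G ((u - 1) ^ n) = 0 := by
      rw [map_pow, map_sub, map_one, hb, add_sub_cancel_left, hn]
    obtain ⟨m, hm⟩ := hker _ h0
    exact ⟨n * m, by rw [pow_mul, hm]⟩
end
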